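/- Let G be a finite set of labeled polynomials containing f_i^[e_i] for every i = 1,...,m, and let f^[u] be a labeled polynomial (f = u·f⃗). If for every critical pair (x^{t_g}, g^[v], x^{t_h}, h^[w]) of two elements of G with s(x^{t_g} v) ⪯₂ s(u), the S-polynomial of that pair has a standard representation w.r.t. G, then f^[u] has a standard representation w.r.t. G. -/

import Mathlib

/-!
The proof is Buchberger's cancellation argument, carried out with a bound on signatures.

Write `S = s(u)`. For a predicate `Q` on exponents let `W Q` (`boundedSpan`) be the `k`-span of the
multiples `x^t g` with `g^[v] ∈ G`, all exponents of `x^t g` in `Q`, and `s(x^t v) ⪯ S`. Then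
`f ∈ W (⪯ lpp f)` gives the desired standard representation (`hasStdRep_of_mem_boundedSpan`), and
`f = u ⬝ f⃗` lies in `W (⪯ δ)` for some `δ`, because `G` contains all `fᵢ^[eᵢ]`.

It remains to decrease `δ` along the well-order `≺₁`. Suppose `f ∈ W (⪯ δ)` and `lpp f ≺ δ`. Two
generators `x^t g`, `x^t' g'` with the same leading monomial `x^δ` satisfy
`x^t g - c x^t' g' = x^γ · S-polynomial`, where `x^γ` is the cofactor of the lcm in `x^δ`. A standard
representation of the S-polynomial only has monomials below the lcm and signatures at most that of
the larger component, so this difference lies in `W (≺ δ)` (`sub_mem_boundedSpan`). Since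
`x^γ ⪰ 1`, the signature bound `S` passes from the multiple to the critical pair itself, which is
what allows the hypothesis to be used. Consequently `W (⪯ δ)` is contained in
`W (≺ δ) + k · x^t g` for any single generator `x^t g` with leading monomial `x^δ`, and comparing
coefficients at `x^δ` yields `f ∈ W (≺ δ)` (`mem_boundedSpan_lt`).

Multiplicativity of leading terms enters through `add_le_of_mem_support` and
`sig_monomial_le`: replacing `p` by one of its monomials in `p g` or `p v` does not raise the leading
monomial or the signature, so polynomial cofactors can be expanded into monomials.
-/

open MvPolynomial

noncomputable section

variable {k : Type*} [Field k] {m n : ℕ}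

/-- The leading power product of a polynomial, w.r.t. the monomial order `L1`;
`⊥` for the zero polynomial. -/
def lpp (L1 : LinearOrder (Fin n →₀ ℕ)) (f : MvPolynomial (Fin n) k) :
    WithBot (Fin n →₀ ℕ) :=
  @Finset.max _ L1 f.support

/-- The leading coefficient of a polynomial w.r.t. the monomial order `L1`. -/
def plc (L1 : LinearOrder (Fin n →₀ ℕ)) (f : MvPolynomial (Fin n) k) : k :=
  WithBot.recBotCoe 0 (fun α => MvPolynomial.coeff α f) (lpp L1 f)

/-- The support of a module element `u ∈ R^m`, as a set of module monomials `(i, α)`. -/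
def msupport (u : Fin m → MvPolynomial (Fin n) k) : Finset (Fin m × (Fin n →₀ ℕ)) :=
  Finset.univ.biUnion fun i => (u i).support.image fun α => (i, α)

/-- The signature of a module element, w.r.t. the module term order `L2`;
`⊥` for the zero element. -/
def sig (L2 : LinearOrder (Fin m × (Fin n →₀ ℕ))) (u : Fin m → MvPolynomial (Fin n) k) :
    WithBot (Fin m × (Fin n →₀ ℕ)) :=
  @Finset.max _ L2 (msupport u)

/-- The leading coefficient of a module element (the coefficient at its signature). -/
def mlc (L2 : LinearOrder (Fin m × (Fin n →₀ ℕ))) (u : Fin m → MvPolynomial (Fin n) k) : k :=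
  WithBot.recBotCoe 0 (fun p => MvPolynomial.coeff p.2 (u p.1)) (sig L2 u)

/-- The strict order on `WithBot β` induced by a linear order `L` on `β`
(`⊥` smaller than everything). -/
def bslt {β : Type*} (L : LinearOrder β) (a b : WithBot β) : Prop :=
  WithBot.recBotCoe False (fun y => WithBot.recBotCoe True (fun x => L.lt x y) a) b

/-- The order on `WithBot β` induced by a linear order `L` on `β`. -/
def bsle {β : Type*} (L : LinearOrder β) (a b : WithBot β) : Prop :=
  WithBot.recBotCoe (a = ⊥) (fun y => WithBot.recBotCoe True (fun x => L.le x y) a) b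

/-- Multiplication of a module element by the monomial `x^t`. -/
def tsmul (t : Fin n →₀ ℕ) (u : Fin m → MvPolynomial (Fin n) k) :
    Fin m → MvPolynomial (Fin n) k :=
  fun i => monomial t (1 : k) * u i

/-- `u ⬝ f⃗ = u₁ f₁ + ⋯ + u_m f_m`. -/
def dotf (fvec u : Fin m → MvPolynomial (Fin n) k) : MvPolynomial (Fin n) k :=
  ∑ i, u i * fvec i

/-- The least common multiple of two monomials (componentwise max of exponents). -/
def mlcm (α β : Fin n →₀ ℕ) : Fin n →₀ ℕ :=
  Finsupp.zipWith max (max_self 0) α β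

/-- `G` is a labeled Gröbner basis of `(f₁, …, f_m)`. -/
def IsLabeledGB (L1 : LinearOrder (Fin n →₀ ℕ)) (L2 : LinearOrder (Fin m × (Fin n →₀ ℕ)))
    (fvec : Fin m → MvPolynomial (Fin n) k)
    (G : Set (MvPolynomial (Fin n) k × (Fin m → MvPolynomial (Fin n) k))) : Prop :=
  ∀ (f : MvPolynomial (Fin n) k) (u : Fin m → MvPolynomial (Fin n) k),
    f = dotf fvec u → f ≠ 0 →
      ∃ gv ∈ G, gv.1 ≠ 0 ∧ ∃ t : Fin n →₀ ℕ,
        WithBot.map (fun β => t + β) (lpp L1 gv.1) = lpp L1 f ∧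
        bsle L2 (sig L2 (tsmul t gv.2)) (sig L2 u)

/-- `f^[u]` has a standard representation w.r.t. the set `B` of labeled polynomials. -/
def HasStdRep (L1 : LinearOrder (Fin n →₀ ℕ)) (L2 : LinearOrder (Fin m × (Fin n →₀ ℕ)))
    (B : Set (MvPolynomial (Fin n) k × (Fin m → MvPolynomial (Fin n) k)))
    (f : MvPolynomial (Fin n) k) (u : Fin m → MvPolynomial (Fin n) k) : Prop :=
  ∃ (N : ℕ) (p : Fin N → MvPolynomial (Fin n) k)
      (g : Fin N → MvPolynomial (Fin n) k × (Fin m → MvPolynomial (Fin n) k)),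
    (∀ i, g i ∈ B) ∧ f = ∑ i, p i * (g i).1 ∧
    (∀ i, bsle L1 (lpp L1 (p i * (g i).1)) (lpp L1 f)) ∧
    (∀ i, bsle L2 (sig L2 (fun j => p i * (g i).2 j)) (sig L2 u))

/-- The polynomial part of the S-polynomial of the critical pair `(x^tg, gv, x^th, hw)`. -/
def spolyP (L1 : LinearOrder (Fin n →₀ ℕ))
    (gv hw : MvPolynomial (Fin n) k × (Fin m → MvPolynomial (Fin n) k))
    (tg th : Fin n →₀ ℕ) : MvPolynomial (Fin n) k :=
  monomial tg (1 : k) * gv.1 - C (plc L1 gv.1 / plc L1 hw.1) * (monomial th (1 : k) * hw.1)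

/-- The module part of the S-polynomial of the critical pair `(x^tg, gv, x^th, hw)`. -/
def spolyV (L1 : LinearOrder (Fin n →₀ ℕ))
    (gv hw : MvPolynomial (Fin n) k × (Fin m → MvPolynomial (Fin n) k))
    (tg th : Fin n →₀ ℕ) : Fin m → MvPolynomial (Fin n) k :=
  fun j =>
    monomial tg (1 : k) * gv.2 j - C (plc L1 gv.1 / plc L1 hw.1) * (monomial th (1 : k) * hw.2 j)

/-- `f^[u]` is reducible (in one step, by a one-side-reduction) by the set `G`
of labeled polynomials. -/
def Reducible (L1 : LinearOrder (Fin n →₀ ℕ)) (L2 : LinearOrder (Fin m × (Fin n →₀ ℕ)))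
    (G : Set (MvPolynomial (Fin n) k × (Fin m → MvPolynomial (Fin n) k)))
    (f : MvPolynomial (Fin n) k) (u : Fin m → MvPolynomial (Fin n) k) : Prop :=
  f ≠ 0 ∧ ∃ hw ∈ G, hw.1 ≠ 0 ∧ ∃ t : Fin n →₀ ℕ,
    WithBot.map (fun β => t + β) (lpp L1 hw.1) = lpp L1 f ∧
    bslt L2 (sig L2 (tsmul t hw.2)) (sig L2 u)

/-- `x^t ⬝ fu` is generalized rewritable by the finite set `B` (w.r.t. the strict partial
order `r` on labeled polynomials). -/
def GenRewritable (L2 : LinearOrder (Fin m × (Fin n →₀ ℕ)))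
    (B : Finset (MvPolynomial (Fin n) k × (Fin m → MvPolynomial (Fin n) k)))
    (r : (MvPolynomial (Fin n) k × (Fin m → MvPolynomial (Fin n) k)) →
         (MvPolynomial (Fin n) k × (Fin m → MvPolynomial (Fin n) k)) → Prop)
    (t : Fin n →₀ ℕ)
    (fu : MvPolynomial (Fin n) k × (Fin m → MvPolynomial (Fin n) k)) : Prop :=
  ∃ gv ∈ B, gv.2 ≠ 0 ∧
    (∃ pq qq : Fin m × (Fin n →₀ ℕ), sig L2 gv.2 = ↑pq ∧ sig L2 fu.2 = ↑qq ∧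
      pq.1 = qq.1 ∧ ∃ γ : Fin n →₀ ℕ, pq.2 + γ = t + qq.2) ∧
    r gv fu

/-- The position-over-term module order: `(i, α) ≺ (j, β)` iff `i > j`,
or `i = j` and `α ≺₁ β`. -/
def potLT (L1 : LinearOrder (Fin n →₀ ℕ)) (p q : Fin m × (Fin n →₀ ℕ)) : Prop :=
  q.1 < p.1 ∨ (p.1 = q.1 ∧ L1.lt p.2 q.2)

/-- `p` is the signature of the module element `w` w.r.t. the linear order `lt`
on module monomials. -/
def IsSigWrt (lt : (Fin m × (Fin n →₀ ℕ)) → (Fin m × (Fin n →₀ ℕ)) → Prop)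
    (w : Fin m → MvPolynomial (Fin n) k) (p : Fin m × (Fin n →₀ ℕ)) : Prop :=
  p ∈ msupport w ∧ ∀ q ∈ msupport w, q ≠ p → lt q p

end

section StdRep

/-! ### The orders on `WithBot` -/

lemma bsle_iff {β : Type*} [L : LinearOrder β] (a b : WithBot β) : bsle L a b ↔ a ≤ b := by
  induction a using WithBot.recBotCoe <;> induction b using WithBot.recBotCoe <;>
    simp [bsle]

lemma bsle_refl {β : Type*} (L : LinearOrder β) (a : WithBot β) : bsle L a a := by
  rw [bsle_iff]

lemma bsle_trans {β : Type*} (L : LinearOrder β) {a b c : WithBot β}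
    (h : bsle L a b) (h' : bsle L b c) : bsle L a c := by
  rw [bsle_iff] at *; exact le_trans h h'

lemma bsle_total {β : Type*} (L : LinearOrder β) (a b : WithBot β) :
    bsle L a b ∨ bsle L b a := by
  rw [bsle_iff, bsle_iff]; exact le_total a b

lemma bsle_bot {β : Type*} (L : LinearOrder β) (a : WithBot β) : bsle L ⊥ a := by
  rw [bsle_iff]; exact bot_le

lemma bsle_max_iff {β : Type*} (L : LinearOrder β) (s : Finset β) (d : WithBot β) :
    bsle L (@Finset.max _ L s) d ↔ ∀ a ∈ s, bsle L (a : WithBot β) d := by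
  simp only [bsle_iff, Finset.max_le_iff]

lemma exists_max {β : Type*} (L : LinearOrder β) {s : Finset β} (hs : s.Nonempty) :
    ∃ a ∈ s, @Finset.max _ L s = (a : WithBot β) ∧ ∀ b ∈ s, L.le b a := by
  obtain ⟨a, ha⟩ := Finset.max_of_nonempty hs
  exact ⟨a, Finset.mem_of_max ha, ha, fun b hb => Finset.le_max_of_eq hb ha⟩

variable {k : Type*} [Field k] {m n : ℕ}

lemma bsle_lpp_iff (L1 : LinearOrder (Fin n →₀ ℕ)) (f : MvPolynomial (Fin n) k)
    (d : WithBot (Fin n →₀ ℕ)) :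
    bsle L1 (lpp L1 f) d ↔ ∀ a ∈ f.support, bsle L1 (a : WithBot (Fin n →₀ ℕ)) d :=
  bsle_max_iff L1 _ d

lemma bsle_sig_iff (L2 : LinearOrder (Fin m × (Fin n →₀ ℕ)))
    (u : Fin m → MvPolynomial (Fin n) k) (d : WithBot (Fin m × (Fin n →₀ ℕ))) :
    bsle L2 (sig L2 u) d ↔
      ∀ q ∈ msupport u, bsle L2 (q : WithBot (Fin m × (Fin n →₀ ℕ))) d :=
  bsle_max_iff L2 _ d

lemma exists_lpp (L1 : LinearOrder (Fin n →₀ ℕ)) {f : MvPolynomial (Fin n) k} (hf : f ≠ 0) :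
    ∃ a ∈ f.support, lpp L1 f = (a : WithBot (Fin n →₀ ℕ)) ∧ ∀ b ∈ f.support, L1.le b a :=
  exists_max L1 (by simpa [Finset.nonempty_iff_ne_empty] using hf)

lemma mem_msupport {u : Fin m → MvPolynomial (Fin n) k} {q : Fin m × (Fin n →₀ ℕ)} :
    q ∈ msupport u ↔ coeff q.2 (u q.1) ≠ 0 := by
  obtain ⟨i, a⟩ := q
  simp [msupport]

/-! ### Multiplication by monomials and compatibility of the orders -/

lemma mem_support_monomial_mul {t a : Fin n →₀ ℕ} {f : MvPolynomial (Fin n) k} :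
    a ∈ (monomial t (1 : k) * f).support ↔ ∃ b ∈ f.support, a = t + b := by
  constructor
  · intro h
    rw [mem_support_iff, coeff_monomial_mul'] at h
    split_ifs at h with hle
    · refine ⟨a - t, ?_, (add_tsub_cancel_of_le hle).symm⟩
      simpa using h
    · exact absurd rfl h
  · rintro ⟨b, hb, rfl⟩
    rw [mem_support_iff, coeff_monomial_mul]
    simpa using hb

lemma mem_msupport_monomial_mul {t : Fin n →₀ ℕ} {q : Fin m × (Fin n →₀ ℕ)}
    {u : Fin m → MvPolynomial (Fin n) k} :
    q ∈ msupport (tsmul t u) ↔ ∃ p ∈ msupport u, q = (p.1, t + p.2) := by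
  obtain ⟨i, a⟩ := q
  rw [mem_msupport]
  change coeff a (monomial t (1 : k) * u i) ≠ 0 ↔ _
  rw [← mem_support_iff, mem_support_monomial_mul]
  constructor
  · rintro ⟨b, hb, rfl⟩
    exact ⟨(i, b), by simpa [mem_msupport] using hb, rfl⟩
  · rintro ⟨⟨j, b⟩, hp, h⟩
    simp only [Prod.mk.injEq] at h
    obtain ⟨rfl, rfl⟩ := h
    exact ⟨b, by simpa [mem_msupport] using hp, rfl⟩

lemma add_le_add_of_le_order {L1 : LinearOrder (Fin n →₀ ℕ)}
    (h1add : ∀ a b c : Fin n →₀ ℕ, L1.lt a b → L1.lt (a + c) (b + c))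
    {a b : Fin n →₀ ℕ} (c : Fin n →₀ ℕ) (h : L1.le a b) : L1.le (c + a) (c + b) := by
  rcases (@le_iff_lt_or_eq _ L1.toPartialOrder _ _).1 h with h | rfl
  · rw [add_comm c, add_comm c]
    exact @le_of_lt _ L1.toPreorder _ _ (h1add _ _ c h)
  · exact L1.le_refl _

lemma add_lt_add_of_lt_order {L1 : LinearOrder (Fin n →₀ ℕ)}
    (h1add : ∀ a b c : Fin n →₀ ℕ, L1.lt a b → L1.lt (a + c) (b + c))
    {a b : Fin n →₀ ℕ} (c : Fin n →₀ ℕ) (h : L1.lt a b) : L1.lt (c + a) (c + b) := by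
  rw [add_comm c, add_comm c]
  exact h1add _ _ c h

lemma shift_le_shift {L2 : LinearOrder (Fin m × (Fin n →₀ ℕ))}
    (h2add : ∀ (p q : Fin m × (Fin n →₀ ℕ)) (γ : Fin n →₀ ℕ),
      L2.lt p q → L2.lt (p.1, p.2 + γ) (q.1, q.2 + γ))
    {p q : Fin m × (Fin n →₀ ℕ)} (c : Fin n →₀ ℕ) (h : L2.le p q) :
    L2.le (p.1, c + p.2) (q.1, c + q.2) := by
  rcases (@le_iff_lt_or_eq _ L2.toPartialOrder _ _).1 h with h | rfl
  · rw [add_comm c, add_comm c]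
    exact @le_of_lt _ L2.toPreorder _ _ (h2add _ _ c h)
  · exact L2.le_refl _

/-- In a well-founded monomial order `1` is the smallest monomial: otherwise the multiples
of a negative exponent would form an infinite descending chain. -/
lemma zero_le_of_wf {L1 : LinearOrder (Fin n →₀ ℕ)}
    (h1add : ∀ a b c : Fin n →₀ ℕ, L1.lt a b → L1.lt (a + c) (b + c))
    (h1wf : WellFounded L1.lt) (c : Fin n →₀ ℕ) : L1.le 0 c := by
  by_contra hc
  have hc : L1.lt c 0 := (@not_le _ L1 _ _).1 hc
  obtain ⟨_, ⟨j, rfl⟩, hmin⟩ :=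
    h1wf.has_min (Set.range fun j : ℕ => j • c) ⟨_, ⟨0, rfl⟩⟩
  refine hmin ((j + 1) • c) ⟨j + 1, rfl⟩ ?_
  have := add_lt_add_of_lt_order h1add (j • c) hc
  simpa [add_smul] using this

lemma pos_le_pos {L1 : LinearOrder (Fin n →₀ ℕ)} {L2 : LinearOrder (Fin m × (Fin n →₀ ℕ))}
    (h21 : ∀ (i : Fin m) (α β : Fin n →₀ ℕ), L1.lt α β → L2.lt (i, α) (i, β))
    (i : Fin m) {a b : Fin n →₀ ℕ} (h : L1.le a b) : L2.le (i, a) (i, b) := by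
  rcases (@le_iff_lt_or_eq _ L1.toPartialOrder _ _).1 h with h | rfl
  · exact @le_of_lt _ L2.toPreorder _ _ (h21 _ _ _ h)
  · exact L2.le_refl _

/-! ### Multiplicativity of leading terms -/

/-- Leading terms multiply: no other pair of exponents contributes to the coefficient at the
sum of the two leading exponents. -/
lemma coeff_add_mul_ne_zero {L1 : LinearOrder (Fin n →₀ ℕ)}
    (h1add : ∀ a b c : Fin n →₀ ℕ, L1.lt a b → L1.lt (a + c) (b + c))
    {p q : MvPolynomial (Fin n) k} {a b : Fin n →₀ ℕ}
    (ha : a ∈ p.support) (hb : b ∈ q.support)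
    (ha' : ∀ c ∈ p.support, L1.le c a) (hb' : ∀ c ∈ q.support, L1.le c b) :
    coeff (a + b) (p * q) ≠ 0 := by
  classical
  rw [coeff_mul, Finset.sum_eq_single (a, b)]
  · exact mul_ne_zero (mem_support_iff.1 ha) (mem_support_iff.1 hb)
  · rintro ⟨c, d⟩ hcd hne
    rw [Finset.HasAntidiagonal.mem_antidiagonal] at hcd
    simp only at hcd
    by_contra h0
    have hc : c ∈ p.support := mem_support_iff.2 (left_ne_zero_of_mul h0)
    have hd : d ∈ q.support := mem_support_iff.2 (right_ne_zero_of_mul h0)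
    rcases (@le_iff_lt_or_eq _ L1.toPartialOrder _ _).1 (ha' c hc) with h | rfl
    · have h2 := @lt_of_lt_of_le _ L1.toPreorder _ _ _ (h1add c a d h)
        (add_le_add_of_le_order h1add a (hb' d hd))
      rw [hcd] at h2
      exact @lt_irrefl _ L1.toPreorder _ h2
    · exact hne (by rw [add_left_cancel hcd])
  · intro h
    exact absurd ((Finset.HasAntidiagonal.mem_antidiagonal (n := a + b) (a := (a, b))).2 rfl) h

/-- Every product of a monomial of `p` with a monomial of `g` is at most `lpp (p * g)`. -/
lemma add_le_of_mem_support {L1 : LinearOrder (Fin n →₀ ℕ)}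
    (h1add : ∀ a b c : Fin n →₀ ℕ, L1.lt a b → L1.lt (a + c) (b + c))
    {p g : MvPolynomial (Fin n) k} {t b : Fin n →₀ ℕ}
    (ht : t ∈ p.support) (hb : b ∈ g.support) :
    ∃ c ∈ (p * g).support, L1.le (t + b) c := by
  obtain ⟨t0, ht0, -, hmax⟩ := exists_lpp L1 (f := p) (by rintro rfl; simp at ht)
  obtain ⟨b0, hb0, -, hmax'⟩ := exists_lpp L1 (f := g) (by rintro rfl; simp at hb)
  refine ⟨t0 + b0, mem_support_iff.2 (coeff_add_mul_ne_zero h1add ht0 hb0 hmax hmax'), ?_⟩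
  refine L1.le_trans _ (t + b0) _ (add_le_add_of_le_order h1add t (hmax' b hb)) ?_
  rw [add_comm t, add_comm t0]
  exact add_le_add_of_le_order h1add b0 (hmax t ht)

/-- Module analogue of `add_le_of_mem_support`: multiplying `v` by one monomial of `p` gives a
signature at most `s(p v)`. -/
lemma sig_monomial_le {L1 : LinearOrder (Fin n →₀ ℕ)} {L2 : LinearOrder (Fin m × (Fin n →₀ ℕ))}
    (h1add : ∀ a b c : Fin n →₀ ℕ, L1.lt a b → L1.lt (a + c) (b + c))
    (h2add : ∀ (p q : Fin m × (Fin n →₀ ℕ)) (γ : Fin n →₀ ℕ),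
      L2.lt p q → L2.lt (p.1, p.2 + γ) (q.1, q.2 + γ))
    (h21 : ∀ (i : Fin m) (α β : Fin n →₀ ℕ), L1.lt α β → L2.lt (i, α) (i, β))
    {p : MvPolynomial (Fin n) k} {v : Fin m → MvPolynomial (Fin n) k}
    {t : Fin n →₀ ℕ} (ht : t ∈ p.support) :
    bsle L2 (sig L2 (tsmul t v)) (sig L2 (fun j => p * v j)) := by
  rw [bsle_sig_iff]
  intro q hq
  obtain ⟨⟨i, b⟩, hb, rfl⟩ := mem_msupport_monomial_mul.1 hq
  obtain ⟨⟨i0, b0⟩, hb0, -, hmax⟩ := exists_max L2 ⟨_, hb⟩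
  -- within component `i0` the two orders agree, so `b0` is also the leading exponent of `v i0`
  have hmax1 : ∀ c ∈ (v i0).support, L1.le c b0 := by
    intro c hc
    by_contra hlt
    exact (@not_lt _ L2 _ _).2 (hmax (i0, c) (mem_msupport.2 (mem_support_iff.1 hc)))
      (h21 _ _ _ ((@not_le _ L1 _ _).1 hlt))
  obtain ⟨c, hc, hle⟩ := add_le_of_mem_support h1add ht
    (mem_support_iff.2 (mem_msupport.1 hb0))
  refine bsle_trans L2 (b := ((i0, c) : Fin m × (Fin n →₀ ℕ)))
    (L2.le_trans _ (i0, t + b0) _ (shift_le_shift h2add t (hmax _ hb)) (pos_le_pos h21 i0 hle)) ?_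
  exact (bsle_sig_iff L2 _ _).1 (bsle_refl L2 _) _ (mem_msupport.2 (mem_support_iff.1 hc))

lemma sig_tsmul_mono {L2 : LinearOrder (Fin m × (Fin n →₀ ℕ))}
    (h2add : ∀ (p q : Fin m × (Fin n →₀ ℕ)) (γ : Fin n →₀ ℕ),
      L2.lt p q → L2.lt (p.1, p.2 + γ) (q.1, q.2 + γ))
    {v w : Fin m → MvPolynomial (Fin n) k} (t : Fin n →₀ ℕ)
    (h : bsle L2 (sig L2 v) (sig L2 w)) :
    bsle L2 (sig L2 (tsmul t v)) (sig L2 (tsmul t w)) := by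
  rw [bsle_sig_iff]
  intro q hq
  obtain ⟨p, hp, rfl⟩ := mem_msupport_monomial_mul.1 hq
  have hpw := (bsle_sig_iff L2 _ _).1 h p hp
  rcases (msupport w).eq_empty_or_nonempty with he | hne
  · have hbot : sig L2 w = ⊥ := by rw [sig, he]; rfl
    rw [hbot] at hpw
    exact absurd hpw WithBot.coe_ne_bot
  · obtain ⟨r, hr, hrmax, -⟩ := exists_max L2 hne
    rw [show sig L2 w = (r : WithBot _) from hrmax] at hpw
    exact bsle_trans L2 (b := ((r.1, t + r.2) : Fin m × (Fin n →₀ ℕ)))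
      (shift_le_shift h2add t hpw)
      ((bsle_sig_iff L2 _ _).1 (bsle_refl L2 _) _ (mem_msupport_monomial_mul.2 ⟨r, hr, rfl⟩))

lemma sig_le_tsmul {L1 : LinearOrder (Fin n →₀ ℕ)} {L2 : LinearOrder (Fin m × (Fin n →₀ ℕ))}
    (h1add : ∀ a b c : Fin n →₀ ℕ, L1.lt a b → L1.lt (a + c) (b + c))
    (h1wf : WellFounded L1.lt)
    (h21 : ∀ (i : Fin m) (α β : Fin n →₀ ℕ), L1.lt α β → L2.lt (i, α) (i, β))
    (v : Fin m → MvPolynomial (Fin n) k) (t : Fin n →₀ ℕ) :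
    bsle L2 (sig L2 v) (sig L2 (tsmul t v)) := by
  rw [bsle_sig_iff]
  intro q hq
  refine bsle_trans L2 (b := ((q.1, t + q.2) : Fin m × (Fin n →₀ ℕ))) ?_
    ((bsle_sig_iff L2 _ _).1 (bsle_refl L2 _) _ (mem_msupport_monomial_mul.2 ⟨q, hq, rfl⟩))
  have h := add_le_add_of_le_order h1add q.2 (zero_le_of_wf h1add h1wf t)
  rw [add_zero, add_comm q.2 t] at h
  exact pos_le_pos h21 q.1 h

lemma tsmul_tsmul (s t : Fin n →₀ ℕ) (v : Fin m → MvPolynomial (Fin n) k) :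
    tsmul s (tsmul t v) = tsmul (s + t) v := by
  funext j
  simp only [tsmul, ← mul_assoc, monomial_mul, one_mul]

/-! ### Spans of multiples with bounded signature -/

/-- The `k`-span of the multiples `x^t g`, `g^[v] ∈ G`, all of whose exponents satisfy `Q` and
whose signature `s(x^t v)` is at most `S`. -/
noncomputable def boundedSpan (L2 : LinearOrder (Fin m × (Fin n →₀ ℕ)))
    (G : Set (MvPolynomial (Fin n) k × (Fin m → MvPolynomial (Fin n) k)))
    (S : WithBot (Fin m × (Fin n →₀ ℕ))) (Q : (Fin n →₀ ℕ) → Prop) :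
    Submodule k (MvPolynomial (Fin n) k) :=
  Submodule.span k {h | ∃ gv ∈ G, ∃ t : Fin n →₀ ℕ, h = monomial t (1 : k) * gv.1 ∧
    (∀ a ∈ h.support, Q a) ∧ bsle L2 (sig L2 (tsmul t gv.2)) S}

lemma boundedSpan_mono {L2 : LinearOrder (Fin m × (Fin n →₀ ℕ))}
    {G : Set (MvPolynomial (Fin n) k × (Fin m → MvPolynomial (Fin n) k))}
    {S : WithBot (Fin m × (Fin n →₀ ℕ))} {Q Q' : (Fin n →₀ ℕ) → Prop} (h : ∀ a, Q a → Q' a) :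
    boundedSpan L2 G S Q ≤ boundedSpan L2 G S Q' := by
  refine Submodule.span_mono ?_
  rintro x ⟨gv, hgv, t, hx, hQ, hS⟩
  exact ⟨gv, hgv, t, hx, fun a ha => h a (hQ a ha), hS⟩

lemma support_of_mem_boundedSpan {L2 : LinearOrder (Fin m × (Fin n →₀ ℕ))}
    {G : Set (MvPolynomial (Fin n) k × (Fin m → MvPolynomial (Fin n) k))}
    {S : WithBot (Fin m × (Fin n →₀ ℕ))} {Q : (Fin n →₀ ℕ) → Prop}
    {f : MvPolynomial (Fin n) k} (hf : f ∈ boundedSpan L2 G S Q) :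
    ∀ a, coeff a f ≠ 0 → Q a := by
  induction hf using Submodule.span_induction with
  | mem x h =>
    obtain ⟨gv, hgv, t, hx, hQ, hS⟩ := h
    exact fun a ha => hQ a (mem_support_iff.2 ha)
  | zero => simp
  | add x y _ _ hx hy =>
    intro a ha
    by_cases h : coeff a x = 0
    · exact hy a (by simpa [h] using ha)
    · exact hx a h
  | smul c x _ hx =>
    intro a ha
    exact hx a (by rw [coeff_smul] at ha; exact right_ne_zero_of_mul ha)

/-- An element of a span involves finitely many generators, so their leading exponents have a
maximum `d`; either `d = ⊥` or `d` is an exponent satisfying `Q`. -/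
lemma exists_bound_of_mem_boundedSpan (L1 : LinearOrder (Fin n →₀ ℕ))
    {L2 : LinearOrder (Fin m × (Fin n →₀ ℕ))}
    {G : Set (MvPolynomial (Fin n) k × (Fin m → MvPolynomial (Fin n) k))}
    {S : WithBot (Fin m × (Fin n →₀ ℕ))} {Q : (Fin n →₀ ℕ) → Prop}
    {f : MvPolynomial (Fin n) k} (hf : f ∈ boundedSpan L2 G S Q) :
    ∃ d : WithBot (Fin n →₀ ℕ), f ∈ boundedSpan L2 G S (fun a => bsle L1 a d) ∧
      ∀ δ : Fin n →₀ ℕ, d = δ → Q δ := by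
  induction hf using Submodule.span_induction with
  | mem x h =>
    obtain ⟨gv, hgv, t, hx, hQ, hS⟩ := h
    refine ⟨lpp L1 x, Submodule.subset_span ⟨gv, hgv, t, hx,
      (bsle_lpp_iff L1 _ _).1 (bsle_refl L1 _), hS⟩, ?_⟩
    intro δ hδ
    exact hQ _ (@Finset.mem_of_max _ L1 _ _ hδ)
  | zero => exact ⟨⊥, Submodule.zero_mem _, fun δ h => absurd h.symm WithBot.coe_ne_bot⟩
  | add x y _ _ hx hy =>
    obtain ⟨d, hd, hdQ⟩ := hx
    obtain ⟨e, he, heQ⟩ := hy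
    rcases bsle_total L1 d e with h | h
    · exact ⟨e, Submodule.add_mem _
        (boundedSpan_mono (fun a ha => bsle_trans L1 ha h) hd) he, heQ⟩
    · exact ⟨d, Submodule.add_mem _ hd
        (boundedSpan_mono (fun a ha => bsle_trans L1 ha h) he), hdQ⟩
  | smul c x _ hx =>
    obtain ⟨d, hd, hdQ⟩ := hx
    exact ⟨d, Submodule.smul_mem _ _ hd, hdQ⟩

lemma hasStdRep_of_mem_boundedSpan {L1 : LinearOrder (Fin n →₀ ℕ)}
    {L2 : LinearOrder (Fin m × (Fin n →₀ ℕ))}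
    {G : Set (MvPolynomial (Fin n) k × (Fin m → MvPolynomial (Fin n) k))}
    {f : MvPolynomial (Fin n) k} {u : Fin m → MvPolynomial (Fin n) k}
    (hf : f ∈ boundedSpan L2 G (sig L2 u) (fun a => bsle L1 a (lpp L1 f))) :
    HasStdRep L1 L2 G f u := by
  obtain ⟨N, c, h, hsum⟩ := Submodule.mem_span_set'.1 hf
  choose gv hgv t hx hQ hS using fun i => (h i).2
  have hmul : ∀ i (r : MvPolynomial (Fin n) k),
      monomial (t i) (c i) * r = c i • (monomial (t i) (1 : k) * r) := by
    intro i r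
    rw [← smul_mul_assoc, smul_monomial, smul_eq_mul, mul_one]
  refine ⟨N, fun i => monomial (t i) (c i), gv, hgv, ?_, ?_, ?_⟩
  · rw [← hsum]
    exact Finset.sum_congr rfl fun i _ => by rw [hmul, hx i]
  · intro i
    rw [bsle_lpp_iff]
    intro a ha
    rw [hmul, ← hx i] at ha
    exact hQ i a (support_smul ha)
  · intro i
    rw [bsle_sig_iff]
    intro q hq
    refine (bsle_sig_iff L2 _ _).1 (hS i) q ?_
    rw [mem_msupport] at hq ⊢
    rw [hmul, coeff_smul] at hq
    exact right_ne_zero_of_mul hq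

/-- If all exponents of `p g` are below `τ` and `s(x^γ p v) ⪯ S`, then expanding `p` into monomials
writes `x^γ p g` as a combination of multiples of `g` with exponents below `γ + τ` and signature
at most `S`. -/
lemma monomial_mul_mem_boundedSpan {L1 : LinearOrder (Fin n →₀ ℕ)}
    {L2 : LinearOrder (Fin m × (Fin n →₀ ℕ))}
    (h1add : ∀ a b c : Fin n →₀ ℕ, L1.lt a b → L1.lt (a + c) (b + c))
    (h2add : ∀ (p q : Fin m × (Fin n →₀ ℕ)) (γ : Fin n →₀ ℕ),
      L2.lt p q → L2.lt (p.1, p.2 + γ) (q.1, q.2 + γ))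
    (h21 : ∀ (i : Fin m) (α β : Fin n →₀ ℕ), L1.lt α β → L2.lt (i, α) (i, β))
    {G : Set (MvPolynomial (Fin n) k × (Fin m → MvPolynomial (Fin n) k))}
    {S : WithBot (Fin m × (Fin n →₀ ℕ))} {γ τ : Fin n →₀ ℕ}
    {p : MvPolynomial (Fin n) k}
    {gv : MvPolynomial (Fin n) k × (Fin m → MvPolynomial (Fin n) k)} (hgv : gv ∈ G)
    (hlt : ∀ a ∈ (p * gv.1).support, L1.lt a τ)
    (hS : bsle L2 (sig L2 (tsmul γ fun j => p * gv.2 j)) S) :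
    monomial γ (1 : k) * (p * gv.1) ∈ boundedSpan L2 G S (fun a => L1.lt a (γ + τ)) := by
  have hexp : monomial γ (1 : k) * (p * gv.1) =
      ∑ t ∈ p.support, coeff t p • (monomial (γ + t) (1 : k) * gv.1) := by
    conv_lhs => rw [p.as_sum]
    rw [Finset.sum_mul, Finset.mul_sum]
    refine Finset.sum_congr rfl fun t _ => ?_
    rw [← mul_assoc, monomial_mul, one_mul, ← smul_mul_assoc, smul_monomial, smul_eq_mul, mul_one]
  rw [hexp]
  refine Submodule.sum_mem _ fun t ht => Submodule.smul_mem _ _ (Submodule.subset_span ?_)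
  refine ⟨gv, hgv, γ + t, rfl, ?_, ?_⟩
  · intro a ha
    obtain ⟨b, hb, rfl⟩ := mem_support_monomial_mul.1 ha
    obtain ⟨c, hc, hle⟩ := add_le_of_mem_support h1add ht hb
    rw [add_assoc]
    exact add_lt_add_of_lt_order h1add γ (@lt_of_le_of_lt _ L1.toPreorder _ _ _ hle (hlt c hc))
  · rw [← tsmul_tsmul]
    exact bsle_trans L2 (sig_tsmul_mono h2add γ (sig_monomial_le h1add h2add h21 ht)) hS

/-! ### Cancellation of leading terms -/

lemma plc_eq {L1 : LinearOrder (Fin n →₀ ℕ)} {f : MvPolynomial (Fin n) k} {a : Fin n →₀ ℕ}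
    (h : lpp L1 f = (a : WithBot (Fin n →₀ ℕ))) : plc L1 f = coeff a f := by
  rw [plc, h]; rfl

lemma mem_support_of_lpp {L1 : LinearOrder (Fin n →₀ ℕ)} {f : MvPolynomial (Fin n) k}
    {a : Fin n →₀ ℕ} (h : lpp L1 f = (a : WithBot (Fin n →₀ ℕ))) :
    a ∈ f.support ∧ ∀ b ∈ f.support, L1.le b a :=
  ⟨@Finset.mem_of_max _ L1 _ _ h, fun _ hb => @Finset.le_max_of_eq _ L1 _ _ _ hb h⟩

/-- Two signature-bounded multiples with the same leading exponent `δ` differ, after scaling, by a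
multiple of an S-polynomial; if the latter has a standard representation, the difference is
a combination of multiples with exponents below `δ`. The larger signature is on the side of `gv`. -/
lemma sub_mem_boundedSpan {L1 : LinearOrder (Fin n →₀ ℕ)}
    {L2 : LinearOrder (Fin m × (Fin n →₀ ℕ))}
    (h1add : ∀ a b c : Fin n →₀ ℕ, L1.lt a b → L1.lt (a + c) (b + c))
    (h2add : ∀ (p q : Fin m × (Fin n →₀ ℕ)) (γ : Fin n →₀ ℕ),
      L2.lt p q → L2.lt (p.1, p.2 + γ) (q.1, q.2 + γ))
    (h21 : ∀ (i : Fin m) (α β : Fin n →₀ ℕ), L1.lt α β → L2.lt (i, α) (i, β))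
    {G : Set (MvPolynomial (Fin n) k × (Fin m → MvPolynomial (Fin n) k))}
    {S : WithBot (Fin m × (Fin n →₀ ℕ))}
    {gv hw : MvPolynomial (Fin n) k × (Fin m → MvPolynomial (Fin n) k)}
    {a b τ tg th γ : Fin n →₀ ℕ}
    (hga : lpp L1 gv.1 = (a : WithBot (Fin n →₀ ℕ)))
    (hhb : lpp L1 hw.1 = (b : WithBot (Fin n →₀ ℕ)))
    (htg : tg + a = τ) (hth : th + b = τ)
    (hor : bsle L2 (sig L2 (tsmul th hw.2)) (sig L2 (tsmul tg gv.2)))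
    (hS : bsle L2 (sig L2 (tsmul (γ + tg) gv.2)) S)
    (hrep : HasStdRep L1 L2 G (spolyP L1 gv hw tg th) (spolyV L1 gv hw tg th)) :
    monomial (γ + tg) (1 : k) * gv.1 -
      (plc L1 gv.1 / plc L1 hw.1) • (monomial (γ + th) (1 : k) * hw.1) ∈
        boundedSpan L2 G S (fun x => L1.lt x (γ + τ)) := by
  obtain ⟨ha, hamax⟩ := mem_support_of_lpp hga
  obtain ⟨hb, hbmax⟩ := mem_support_of_lpp hhb
  have hlc : coeff b hw.1 ≠ 0 := mem_support_iff.1 hb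
  -- the leading terms of the two components cancel
  have hsp : ∀ x ∈ (spolyP L1 gv hw tg th).support, L1.lt x τ := by
    intro x hx
    have hne : x ≠ τ := by
      rintro rfl
      refine mem_support_iff.1 hx ?_
      rw [spolyP, coeff_sub, coeff_C_mul]
      nth_rw 1 [← htg]
      rw [← hth, coeff_monomial_mul, coeff_monomial_mul, plc_eq hga, plc_eq hhb]
      field_simp
      simp
    refine @lt_of_le_of_ne _ L1.toPartialOrder _ _ ?_ hne
    by_cases h1 : coeff x (monomial tg (1 : k) * gv.1) = 0
    · have h2 : x ∈ (monomial th (1 : k) * hw.1).support := by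
        rw [mem_support_iff] at hx ⊢
        intro h2
        exact hx (by rw [spolyP, coeff_sub, coeff_C_mul, h1, h2]; simp)
      obtain ⟨y, hy, rfl⟩ := mem_support_monomial_mul.1 h2
      rw [← hth]
      exact add_le_add_of_le_order h1add th (hbmax y hy)
    · obtain ⟨y, hy, rfl⟩ := mem_support_monomial_mul.1 (mem_support_iff.2 h1)
      rw [← htg]
      exact add_le_add_of_le_order h1add tg (hamax y hy)
  have hsv : bsle L2 (sig L2 (spolyV L1 gv hw tg th)) (sig L2 (tsmul tg gv.2)) := by
    rw [bsle_sig_iff]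
    intro q hq
    by_cases h1 : q ∈ msupport (tsmul tg gv.2)
    · exact (bsle_sig_iff L2 _ _).1 (bsle_refl L2 _) q h1
    · refine (bsle_sig_iff L2 _ _).1 hor q ?_
      rw [mem_msupport] at h1 hq ⊢
      intro h2
      rw [not_not] at h1
      simp only [tsmul] at h1 h2
      exact hq (by simp only [spolyV, coeff_sub, coeff_C_mul, h1, h2]; simp)
  obtain ⟨N, p, g, hg, hsum, hlp, hsg⟩ := hrep
  have heq : monomial (γ + tg) (1 : k) * gv.1 -
      (plc L1 gv.1 / plc L1 hw.1) • (monomial (γ + th) (1 : k) * hw.1) =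
      monomial γ (1 : k) * spolyP L1 gv hw tg th := by
    have hm : ∀ t : Fin n →₀ ℕ,
        monomial (γ + t) (1 : k) = monomial γ (1 : k) * monomial t (1 : k) := by
      intro t; rw [monomial_mul, one_mul]
    rw [spolyP, hm, hm, smul_eq_C_mul]
    ring
  rw [heq, hsum, Finset.mul_sum]
  refine Submodule.sum_mem _ fun i _ => monomial_mul_mem_boundedSpan h1add h2add h21 (hg i) ?_ ?_
  · intro x hx
    have h1 := (bsle_lpp_iff L1 _ _).1 (hlp i) x hx
    by_contra hnlt
    have hτx : L1.le τ x := (@not_lt _ L1 _ _).1 hnlt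
    by_cases h0 : spolyP L1 gv hw tg th = 0
    · have hbot : lpp L1 (spolyP L1 gv hw tg th) = ⊥ := by
        rw [lpp, h0, support_zero]; rfl
      rw [hbot] at h1
      exact absurd h1 WithBot.coe_ne_bot
    · obtain ⟨y, hy, hy', -⟩ := exists_lpp L1 h0
      rw [hy'] at h1
      exact (@not_lt _ L1 _ _).2 (L1.le_trans _ _ _ hτx h1) (hsp y hy)
  · rw [← tsmul_tsmul] at hS
    exact bsle_trans L2 (sig_tsmul_mono h2add γ (bsle_trans L2 (hsg i) hsv)) hS

/-- If signature-bounded multiples with leading exponent `δ` can be cancelled against each other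
modulo smaller ones, then an element whose own exponents are all below `δ` needs none of them. -/
lemma mem_boundedSpan_lt {L1 : LinearOrder (Fin n →₀ ℕ)}
    {L2 : LinearOrder (Fin m × (Fin n →₀ ℕ))}
    {G : Set (MvPolynomial (Fin n) k × (Fin m → MvPolynomial (Fin n) k))}
    {S : WithBot (Fin m × (Fin n →₀ ℕ))} {δ : Fin n →₀ ℕ}
    (hpair : ∀ gv ∈ G, ∀ hw ∈ G, ∀ t t' : Fin n →₀ ℕ,
      lpp L1 (monomial t (1 : k) * gv.1) = (δ : WithBot (Fin n →₀ ℕ)) →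
      lpp L1 (monomial t' (1 : k) * hw.1) = (δ : WithBot (Fin n →₀ ℕ)) →
      bsle L2 (sig L2 (tsmul t gv.2)) S → bsle L2 (sig L2 (tsmul t' hw.2)) S →
      ∃ c : k, monomial t (1 : k) * gv.1 - c • (monomial t' (1 : k) * hw.1) ∈
        boundedSpan L2 G S (fun x => L1.lt x δ))
    {f : MvPolynomial (Fin n) k}
    (hf : f ∈ boundedSpan L2 G S (fun x => L1.le x δ))
    (hlt : ∀ a ∈ f.support, L1.lt a δ) :
    f ∈ boundedSpan L2 G S (fun x => L1.lt x δ) := by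
  -- a generator either has only exponents below `δ`, or has leading exponent `δ`
  have hdich : ∀ h : MvPolynomial (Fin n) k, (∀ a ∈ h.support, L1.le a δ) →
      (∀ a ∈ h.support, L1.lt a δ) ∨ lpp L1 h = (δ : WithBot (Fin n →₀ ℕ)) := by
    intro h hle
    by_cases hδ : δ ∈ h.support
    · right
      obtain ⟨a, ha, ha', hamax⟩ := exists_lpp L1 (f := h) (by rintro rfl; simp at hδ)
      rw [ha', L1.le_antisymm _ _ (hle a ha) (hamax δ hδ)]
    · left
      intro a ha
      exact @lt_of_le_of_ne _ L1.toPartialOrder _ _ (hle a ha) (fun h' => hδ (h' ▸ ha))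
  by_cases hex : ∃ hw ∈ G, ∃ t' : Fin n →₀ ℕ,
      lpp L1 (monomial t' (1 : k) * hw.1) = (δ : WithBot (Fin n →₀ ℕ)) ∧
      bsle L2 (sig L2 (tsmul t' hw.2)) S
  · obtain ⟨hw, hhw, t', hlpp, hsig⟩ := hex
    have hdec : ∃ c : k, f - c • (monomial t' (1 : k) * hw.1) ∈
        boundedSpan L2 G S (fun x => L1.lt x δ) := by
      clear hlt
      induction hf using Submodule.span_induction with
      | mem x h =>
        obtain ⟨gv, hgv, t, hx, hQ, hS⟩ := h
        rcases hdich x hQ with h | h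
        · refine ⟨0, ?_⟩
          rw [zero_smul, sub_zero]
          exact Submodule.subset_span ⟨gv, hgv, t, hx, h, hS⟩
        · subst hx
          exact hpair gv hgv hw hhw t t' h hlpp hS hsig
      | zero => exact ⟨0, by simp⟩
      | add x y _ _ hx hy =>
        obtain ⟨c, hc⟩ := hx
        obtain ⟨d, hd⟩ := hy
        refine ⟨c + d, ?_⟩
        rw [add_smul, add_sub_add_comm]
        exact Submodule.add_mem _ hc hd
      | smul r x _ hx =>
        obtain ⟨c, hc⟩ := hx
        refine ⟨r * c, ?_⟩
        rw [mul_smul, ← smul_sub]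
        exact Submodule.smul_mem _ _ hc
    obtain ⟨c, hc⟩ := hdec
    have hc0 : c = 0 := by
      have h1 : coeff δ (f - c • (monomial t' (1 : k) * hw.1)) = 0 := by
        by_contra h
        exact @lt_irrefl _ L1.toPreorder _ (support_of_mem_boundedSpan hc δ h)
      have h2 : coeff δ f = 0 := by
        by_contra h
        exact @lt_irrefl _ L1.toPreorder _ (hlt δ (mem_support_iff.2 h))
      rw [coeff_sub, h2, zero_sub, neg_eq_zero, coeff_smul, smul_eq_mul] at h1
      exact (mul_eq_zero.1 h1).resolve_right (mem_support_iff.1 (mem_support_of_lpp hlpp).1)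
    simpa [hc0] using hc
  · refine Submodule.span_le.2 ?_ hf
    rintro x ⟨gv, hgv, t, hx, hQ, hS⟩
    refine Submodule.subset_span ⟨gv, hgv, t, hx, ?_, hS⟩
    refine (hdich x hQ).resolve_right fun h => hex ⟨gv, hgv, t, ?_, hS⟩
    rw [← hx]
    exact h

/-- The leading exponent of `x^t g` is `t` plus that of `g`. -/
lemma lpp_of_monomial_mul {L1 : LinearOrder (Fin n →₀ ℕ)}
    (h1add : ∀ a b c : Fin n →₀ ℕ, L1.lt a b → L1.lt (a + c) (b + c))
    {g : MvPolynomial (Fin n) k} {t δ : Fin n →₀ ℕ}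
    (h : lpp L1 (monomial t (1 : k) * g) = (δ : WithBot (Fin n →₀ ℕ))) :
    g ≠ 0 ∧ ∃ a : Fin n →₀ ℕ, lpp L1 g = (a : WithBot (Fin n →₀ ℕ)) ∧ t + a = δ := by
  obtain ⟨hδ, hmax⟩ := mem_support_of_lpp h
  obtain ⟨b, hb, rfl⟩ := mem_support_monomial_mul.1 hδ
  have hg : g ≠ 0 := by rintro rfl; simp at hb
  obtain ⟨a, ha, ha', hamax⟩ := exists_lpp L1 hg
  refine ⟨hg, a, ha', ?_⟩
  exact L1.le_antisymm _ _ (hmax _ (mem_support_monomial_mul.2 ⟨a, ha, rfl⟩))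
    (add_le_add_of_le_order h1add t (hamax b hb))

lemma mlcm_comm (a b : Fin n →₀ ℕ) : mlcm a b = mlcm b a := by
  ext i
  simp [mlcm, max_comm]

lemma le_mlcm_left (a b : Fin n →₀ ℕ) : a ≤ mlcm a b := by
  intro i
  simp [mlcm]

lemma mlcm_le {a b c : Fin n →₀ ℕ} (ha : a ≤ c) (hb : b ≤ c) : mlcm a b ≤ c := by
  intro i
  simpa [mlcm] using ⟨ha i, hb i⟩

end StdRep

/-- If every S-polynomial of a critical pair of elements of `G` whose (bigger) component
`x^{t_g}·(g^[v])` has signature `⪯₂ s(u)` has a standard representation w.r.t. `G`,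
then the labeled polynomial `f^[u]` has a standard representation w.r.t. `G`.
(Here `G` is a finite set of labeled polynomials containing every `fᵢ^[eᵢ]`.) -/
theorem std_rep_from_spolys (k : Type*) [Field k] (n m : ℕ)
    (L1 : LinearOrder (Fin n →₀ ℕ)) (L2 : LinearOrder (Fin m × (Fin n →₀ ℕ)))
    (h1add : ∀ a b c : Fin n →₀ ℕ, L1.lt a b → L1.lt (a + c) (b + c))
    (h1wf : WellFounded L1.lt)
    (h2add : ∀ (p q : Fin m × (Fin n →₀ ℕ)) (γ : Fin n →₀ ℕ),
      L2.lt p q → L2.lt (p.1, p.2 + γ) (q.1, q.2 + γ))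
    (h21 : ∀ (i : Fin m) (α β : Fin n →₀ ℕ), L1.lt α β → L2.lt (i, α) (i, β))
    (fvec : Fin m → MvPolynomial (Fin n) k)
    (G : Finset (MvPolynomial (Fin n) k × (Fin m → MvPolynomial (Fin n) k)))
    (hGlabeled : ∀ p ∈ G, p.1 = dotf fvec p.2)
    (hGe : ∀ i : Fin m,
      (fvec i, (Pi.single i (1 : MvPolynomial (Fin n) k) :
        Fin m → MvPolynomial (Fin n) k)) ∈ G)
    (f : MvPolynomial (Fin n) k) (u : Fin m → MvPolynomial (Fin n) k)
    (hf : f = dotf fvec u)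
    (hcrit : ∀ gv ∈ G, ∀ hw ∈ G, gv.1 ≠ 0 → hw.1 ≠ 0 →
      ∀ γ δ : Fin n →₀ ℕ,
        lpp L1 gv.1 = (γ : WithBot (Fin n →₀ ℕ)) →
        lpp L1 hw.1 = (δ : WithBot (Fin n →₀ ℕ)) →
        -- orientation: `(x^{t_g}, gv, x^{t_h}, hw)` is the critical pair
        bsle L2 (sig L2 (tsmul (mlcm γ δ - δ) hw.2)) (sig L2 (tsmul (mlcm γ δ - γ) gv.2)) →
        -- signature bound: `s(x^{t_g} v) ⪯₂ s(u)`
        bsle L2 (sig L2 (tsmul (mlcm γ δ - γ) gv.2)) (sig L2 u) →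
        HasStdRep L1 L2 (↑G) (spolyP L1 gv hw (mlcm γ δ - γ) (mlcm γ δ - δ))
          (spolyV L1 gv hw (mlcm γ δ - γ) (mlcm γ δ - δ))) :
    HasStdRep L1 L2 (↑G) f u := by
  -- the initial representation `f = ∑ uᵢ fᵢ`, with no control on the leading monomials
  have hinit : f ∈ boundedSpan L2 (↑G) (sig L2 u) (fun _ => True) := by
    rw [hf, dotf]
    refine Submodule.sum_mem _ fun i _ => ?_
    rw [(u i).as_sum, Finset.sum_mul]
    refine Submodule.sum_mem _ fun t ht => ?_
    have hmul : monomial t (coeff t (u i)) * fvec i =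
        coeff t (u i) • (monomial t (1 : k) * fvec i) := by
      rw [← smul_mul_assoc, smul_monomial, smul_eq_mul, mul_one]
    rw [hmul]
    refine Submodule.smul_mem _ _ (Submodule.subset_span
      ⟨_, hGe i, t, rfl, fun _ _ => trivial, ?_⟩)
    rw [bsle_sig_iff]
    intro q hq
    obtain ⟨⟨j, b⟩, hp, rfl⟩ := mem_msupport_monomial_mul.1 hq
    rw [mem_msupport] at hp
    by_cases hij : j = i
    · subst hij
      have hb : b = 0 := by
        by_contra hb
        refine hp ?_
        simp only [Pi.single_eq_same]
        rw [coeff_one, if_neg (Ne.symm hb)]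
      subst hb
      refine (bsle_sig_iff L2 _ _).1 (bsle_refl L2 _) _ (mem_msupport.2 ?_)
      simpa using ht
    · exact absurd (by simp [Pi.single_eq_of_ne hij]) hp
  -- S-polynomials cancel any two multiples with the same leading monomial
  have hpair : ∀ δ : Fin n →₀ ℕ, ∀ gv ∈ G, ∀ hw ∈ G, ∀ t t' : Fin n →₀ ℕ,
      lpp L1 (monomial t (1 : k) * gv.1) = (δ : WithBot (Fin n →₀ ℕ)) →
      lpp L1 (monomial t' (1 : k) * hw.1) = (δ : WithBot (Fin n →₀ ℕ)) →
      bsle L2 (sig L2 (tsmul t gv.2)) (sig L2 u) →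
      bsle L2 (sig L2 (tsmul t' hw.2)) (sig L2 u) →
      ∃ c : k, monomial t (1 : k) * gv.1 - c • (monomial t' (1 : k) * hw.1) ∈
        boundedSpan L2 (↑G) (sig L2 u) (fun x => L1.lt x δ) := by
    intro δ gv hgv hw hhw t t' hl hl' hs hs'
    obtain ⟨hg0, a, hga, hta⟩ := lpp_of_monomial_mul h1add hl
    obtain ⟨hh0, b, hhb, htb⟩ := lpp_of_monomial_mul h1add hl'
    have haτ : a ≤ mlcm a b := le_mlcm_left a b
    have hbτ : b ≤ mlcm a b := mlcm_comm a b ▸ le_mlcm_left b a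
    have hτδ : mlcm a b ≤ δ := mlcm_le (hta ▸ le_add_self) (htb ▸ le_add_self)
    have htg : mlcm a b - a + a = mlcm a b := tsub_add_cancel_of_le haτ
    have hth : mlcm a b - b + b = mlcm a b := tsub_add_cancel_of_le hbτ
    have hγ : δ - mlcm a b + mlcm a b = δ := tsub_add_cancel_of_le hτδ
    have ht : t = δ - mlcm a b + (mlcm a b - a) := by
      apply add_right_cancel (b := a)
      rw [add_assoc, htg, hγ, hta]
    have ht' : t' = δ - mlcm a b + (mlcm a b - b) := by
      apply add_right_cancel (b := b)
      rw [add_assoc, hth, hγ, htb]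
    rw [ht'] at hs' ⊢
    rw [ht] at hs ⊢
    -- `1 ⪯ x^γ`, so the critical pair inherits the signature bound from its `x^γ`-multiple
    have hdrop : ∀ (s : Fin n →₀ ℕ) (v : Fin m → MvPolynomial (Fin n) k),
        bsle L2 (sig L2 (tsmul (δ - mlcm a b + s) v)) (sig L2 u) →
        bsle L2 (sig L2 (tsmul s v)) (sig L2 u) := by
      intro s v h
      rw [← tsmul_tsmul] at h
      exact bsle_trans L2 (sig_le_tsmul h1add h1wf h21 _ _) h
    rcases bsle_total L2 (sig L2 (tsmul (mlcm a b - b) hw.2))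
      (sig L2 (tsmul (mlcm a b - a) gv.2)) with hor | hor
    · have hrep := hcrit gv hgv hw hhw hg0 hh0 a b hga hhb hor (hdrop _ _ hs)
      have h := sub_mem_boundedSpan h1add h2add h21 hga hhb htg hth hor hs hrep
      rw [hγ] at h
      exact ⟨_, h⟩
    · -- the opposite orientation gives `x^t' h - c x^t g`; divide by `-c ≠ 0`
      have hrep := hcrit hw hhw gv hgv hh0 hg0 b a hhb hga
        (by rw [mlcm_comm b a]; exact hor) (by rw [mlcm_comm b a]; exact hdrop _ _ hs')
      rw [mlcm_comm b a] at hrep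
      have h := sub_mem_boundedSpan h1add h2add h21 hhb hga hth htg hor hs' hrep
      rw [hγ] at h
      have hc : plc L1 hw.1 / plc L1 gv.1 ≠ 0 := by
        rw [plc_eq hhb, plc_eq hga]
        exact div_ne_zero (mem_support_iff.1 (mem_support_of_lpp hhb).1)
          (mem_support_iff.1 (mem_support_of_lpp hga).1)
      refine ⟨(plc L1 hw.1 / plc L1 gv.1)⁻¹, ?_⟩
      have hscaled := Submodule.smul_mem _ (-(plc L1 hw.1 / plc L1 gv.1)⁻¹) h
      rw [smul_sub, smul_smul, neg_mul, inv_mul_cancel₀ hc, neg_smul, neg_smul, one_smul,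
        sub_neg_eq_add, neg_add_eq_sub] at hscaled
      exact hscaled
  -- descent on the bound `δ`
  have hdesc : ∀ δ : Fin n →₀ ℕ,
      f ∈ boundedSpan L2 (↑G) (sig L2 u) (fun x => L1.le x δ) →
      f ∈ boundedSpan L2 (↑G) (sig L2 u) (fun x => bsle L1 x (lpp L1 f)) := by
    intro δ
    induction δ using h1wf.induction with
    | _ δ ih =>
      intro hδ
      by_cases hle : bsle L1 δ (lpp L1 f)
      · exact boundedSpan_mono (fun x hx => bsle_trans L1 (b := (δ : WithBot _)) hx hle) hδ
      · have hlt : ∀ a ∈ f.support, L1.lt a δ := by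
          intro a ha
          refine (@not_le _ L1 _ _).1 fun h => hle ?_
          exact bsle_trans L1 (show bsle L1 (δ : WithBot (Fin n →₀ ℕ)) a from h)
            ((bsle_lpp_iff L1 _ _).1 (bsle_refl L1 _) a ha)
        obtain ⟨d, hd, hdQ⟩ := exists_bound_of_mem_boundedSpan L1
          (mem_boundedSpan_lt (hpair δ) hδ hlt)
        induction d using WithBot.recBotCoe with
        | bot => exact boundedSpan_mono (fun x hx => bsle_trans L1 hx (bsle_bot L1 _)) hd
        | coe d => exact ih d (hdQ d rfl) hd
  obtain ⟨d, hd, -⟩ := exists_bound_of_mem_boundedSpan L1 hinit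
  refine hasStdRep_of_mem_boundedSpan ?_
  induction d using WithBot.recBotCoe with
  | bot => exact boundedSpan_mono (fun x hx => bsle_trans L1 hx (bsle_bot L1 _)) hd
  | coe d => exact hdesc d hd
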